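/- Let X = {0,1}^ℕ be the Cantor space and let Γ be the free group on the disjoint union S ⊔ T of two disjoint countably infinite sets S and T. The set of topologically amenable actions in 𝒮 = Hom(Γ, Homeo(X)) is a dense G_δ subset of 𝒮. -/

import Mathlib

/-!
For a fixed continuous field `m` of densities, almost equivariance of `m` under finitely many group
elements is an open condition on the action, by compactness of the Cantor space `X`; since countably
many pairs `(F, ε)` suffice, amenability is a `G_δ` condition.

If `β` is amenable, so is every product `α × β`, by pulling back fields of densities along the
second projection. Identifying `X × X` with `X` by a homeomorphism which keeps the first `k` digits
of the first component turns `α × β` into an action on `X` which is close to `α` for large `k`. So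
one amenable action suffices for density.

An amenable action of the free group is provided by ping-pong. Split `X` successively into
infinitely many disjoint clopen copies of itself, two for each generator `s`: one attracting for `s`
and one attracting for `s⁻¹`. The attracting piece in which a point lies is the first letter of its
itinerary; moving the point by `s` or `s⁻¹` adds or removes one letter, so that the uniform mean of
the first `N` partial products of the itinerary moves by at most `2 / N` in `ℓ¹`. Only finitely many
generators are tested at a time, and ignoring the other letters makes each partial product a locally
constant function of the point.
-/

/-- The Cantor space `{0,1}^ℕ`, with its product topology. -/
abbrev CantorSp : Type := ℕ → Bool

/-- The topology of uniform convergence on the homeomorphism group of the Cantor space. -/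
instance cantorHomeoTopology : TopologicalSpace (CantorSp ≃ₜ CantorSp) :=
  TopologicalSpace.induced
    (fun φ => ((φ : C(CantorSp, CantorSp)), (φ.symm : C(CantorSp, CantorSp))))
    inferInstance

/-- An action `α` of a (countable discrete) group `Γ` by homeomorphisms on a compact
Hausdorff space `Y` is topologically amenable if for every finite `F ⊆ Γ` and `ε > 0`
there is a map `y ↦ m_y` from `Y` to the finitely supported probability densities on `Γ`,
continuous for the `ℓ¹`-metric, such that `∑_h |m_y(g⁻¹h) − m_{α(g)(y)}(h)| < ε` for all
`g ∈ F`, `y ∈ Y`. -/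
def TopologicallyAmenable {Γ Y : Type*} [Group Γ] [TopologicalSpace Y]
    (α : Γ → Y → Y) : Prop :=
  ∀ F : Finset Γ, ∀ ε : ℝ, 0 < ε →
    ∃ m : Y → Γ → ℝ,
      (∀ y γ, 0 ≤ m y γ ∧ m y γ ≤ 1) ∧
      (∀ y, (Function.support (m y)).Finite) ∧
      (∀ y, ∑' γ, m y γ = 1) ∧
      -- continuity of `y ↦ m_y` in the `ℓ¹`-metric
      (∀ y : Y, ∀ δ : ℝ, 0 < δ → ∃ U : Set Y, IsOpen U ∧ y ∈ U ∧
        ∀ z ∈ U, (∑' γ, |m y γ - m z γ|) < δ) ∧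
      (∀ g ∈ F, ∀ y : Y, (∑' h, |m y (g⁻¹ * h) - m (α g y) h|) < ε)

open Filter Function Topology
open scoped lp

section Densities

variable {Γ : Type*}

lemma ellOne_norm_eq_tsum (u : ℓ¹(Γ, ℝ)) : ‖u‖ = ∑' γ, |u γ| := by
  simp [lp.norm_eq_tsum_rpow (p := 1) (by simp)]

lemma ellOne_dist_eq_tsum (u v : ℓ¹(Γ, ℝ)) : dist u v = ∑' γ, |u γ - v γ| := by
  simp [dist_eq_norm, ellOne_norm_eq_tsum]

lemma memℓp_one_of_finite_support {u : Γ → ℝ} (hu : (support u).Finite) :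
    Memℓp (E := fun _ : Γ ↦ ℝ) u 1 :=
  (memℓp_zero hu).of_exponent_ge zero_le

/-- The finitely supported probability densities on `Γ`, as vectors of `ℓ¹(Γ, ℝ)`, whose norm
distance is the `ℓ¹`-distance of densities. -/
def finDensities (Γ : Type*) : Set ℓ¹(Γ, ℝ) :=
  {u | (∀ γ, 0 ≤ u γ) ∧ (support u).Finite ∧ ∑' γ, u γ = 1}

lemma le_one_of_mem_finDensities {u : ℓ¹(Γ, ℝ)} (hu : u ∈ finDensities Γ) (γ : Γ) : u γ ≤ 1 :=
  hu.2.2 ▸ (lp.memℓp u).summable_of_one.le_tsum γ fun γ' _ ↦ hu.1 γ'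

lemma convex_finDensities : Convex ℝ (finDensities Γ) := by
  rintro u ⟨hu₀, hu, hu₁⟩ v ⟨hv₀, hv, hv₁⟩ a b ha hb hab
  refine ⟨fun γ ↦ add_nonneg (mul_nonneg ha (hu₀ γ)) (mul_nonneg hb (hv₀ γ)), ?_, ?_⟩
  · exact (hu.union hv).subset <| (support_add _ _).trans <|
      Set.union_subset_union (support_const_smul_subset a u) (support_const_smul_subset b v)
  · have hsu := (lp.memℓp u).summable_of_one.mul_left a
    have hsv := (lp.memℓp v).summable_of_one.mul_left b
    rw [lp.coeFn_add, lp.coeFn_smul, lp.coeFn_smul]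
    refine (hsu.tsum_add hsv).trans ?_
    rw [tsum_mul_left, tsum_mul_left, hu₁, hv₁, mul_one, mul_one, hab]

open Classical in
/-- The Dirac density at `γ`. -/
noncomputable def pointMass (γ : Γ) : ℓ¹(Γ, ℝ) := lp.single 1 γ 1

lemma norm_pointMass (γ : Γ) : ‖pointMass γ‖ = 1 := by
  simp [pointMass, lp.norm_single]

lemma pointMass_mem_finDensities (γ : Γ) : pointMass γ ∈ finDensities Γ := by
  classical
  refine ⟨fun γ' ↦ ?_, ?_, ?_⟩
  · rw [pointMass, lp.coeFn_single]
    exact (Pi.single_nonneg.2 zero_le_one : 0 ≤ Pi.single (M := fun _ ↦ ℝ) γ 1) γ'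
  · refine (Set.finite_singleton γ).subset ?_
    rw [pointMass, lp.coeFn_single]
    exact Pi.support_single_subset
  · rw [pointMass, lp.coeFn_single]
    exact tsum_pi_single γ (1 : ℝ)

/-- The mean of the Dirac densities at the first `N` terms of the sequence `u`; it is a density
for `N ≠ 0` and the junk value `0` for `N = 0`. -/
noncomputable def uniformMean (N : ℕ) (u : ℕ → Γ) : ℓ¹(Γ, ℝ) :=
  (N : ℝ)⁻¹ • ∑ j ∈ Finset.range N, pointMass (u j)

lemma uniformMean_mem_finDensities {N : ℕ} (hN : N ≠ 0) (u : ℕ → Γ) :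
    uniformMean N u ∈ finDensities Γ := by
  rw [uniformMean, Finset.smul_sum]
  exact convex_finDensities.sum_mem (fun _ _ ↦ by positivity) (by simp [hN])
    fun j _ ↦ pointMass_mem_finDensities (u j)

lemma dist_uniformMean_succ_le (N : ℕ) (u : ℕ → Γ) :
    dist (uniformMean N fun j ↦ u (j + 1)) (uniformMean N u) ≤ 2 / N := by
  calc dist (uniformMean N fun j ↦ u (j + 1)) (uniformMean N u)
      = (N : ℝ)⁻¹ * ‖pointMass (u N) - pointMass (u 0)‖ := by
        rw [dist_eq_norm, uniformMean, uniformMean, ← smul_sub, ← Finset.sum_sub_distrib,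
          Finset.sum_range_sub fun j ↦ pointMass (u j), norm_smul, norm_inv, Real.norm_natCast]
    _ ≤ (N : ℝ)⁻¹ * (1 + 1) := by
        gcongr
        simpa only [norm_pointMass] using norm_sub_le (pointMass (u N)) (pointMass (u 0))
    _ = 2 / N := by ring

variable [Group Γ]

/-- The translate `h ↦ u (g⁻¹ * h)` of `u`, i.e. the left regular representation of `Γ` on
`ℓ¹(Γ, ℝ)`. -/
def leftTranslate (g : Γ) : ℓ¹(Γ, ℝ) →ₗᵢ[ℝ] ℓ¹(Γ, ℝ) where
  toFun u := ⟨fun h ↦ u (g⁻¹ * h), memℓp_gen <| by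
    simpa [comp_def] using
      (lp.memℓp u).summable_of_one.norm.comp_injective (mul_right_injective g⁻¹)⟩
  map_add' _ _ := rfl
  map_smul' _ _ := rfl
  norm_map' u := by
    simp only [ellOne_norm_eq_tsum]
    exact (Equiv.mulLeft g⁻¹).tsum_eq fun γ ↦ |u γ|

@[simp]
lemma leftTranslate_apply (g : Γ) (u : ℓ¹(Γ, ℝ)) (h : Γ) : leftTranslate g u h = u (g⁻¹ * h) :=
  rfl

lemma leftTranslate_mul (g h : Γ) (u : ℓ¹(Γ, ℝ)) :
    leftTranslate (g * h) u = leftTranslate g (leftTranslate h u) := by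
  ext γ
  simp [mul_assoc]

lemma leftTranslate_one (u : ℓ¹(Γ, ℝ)) : leftTranslate 1 u = u := by
  ext γ
  simp

lemma leftTranslate_pointMass (g γ : Γ) : leftTranslate g (pointMass γ) = pointMass (g * γ) := by
  classical
  ext h
  simp [pointMass, Pi.single_apply, inv_mul_eq_iff_eq_mul]

lemma leftTranslate_uniformMean (N : ℕ) (g : Γ) (u : ℕ → Γ) :
    leftTranslate g (uniformMean N u) = uniformMean N fun j ↦ g * u j := by
  simp only [uniformMean, map_smul, map_sum, leftTranslate_pointMass]

end Densities

section Fields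

variable {Γ Y Z ι : Type*} [Group Γ]

/-- Up to `ε`, the field `m` of vectors of `ℓ¹(Γ, ℝ)` intertwines the map `f` on points with left
translation by `g` on `Γ`. -/
def IsApproxEquivariant (m : Y → ℓ¹(Γ, ℝ)) (g : Γ) (f : Y → Y) (ε : ℝ) : Prop :=
  ∀ y, dist (leftTranslate g (m y)) (m (f y)) < ε

namespace IsApproxEquivariant

variable {m : Y → ℓ¹(Γ, ℝ)} {g h : Γ} {f f' : Y → Y} {δ ε : ℝ}

protected lemma one (m : Y → ℓ¹(Γ, ℝ)) (hε : 0 < ε) : IsApproxEquivariant m 1 id ε := fun y ↦ by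
  simpa [leftTranslate_one] using hε

protected lemma mul (hf : IsApproxEquivariant m g f δ) (hf' : IsApproxEquivariant m h f' ε) :
    IsApproxEquivariant m (g * h) (f ∘ f') (ε + δ) := fun y ↦
  calc dist (leftTranslate (g * h) (m y)) (m (f (f' y)))
      ≤ dist (leftTranslate (g * h) (m y)) (leftTranslate g (m (f' y)))
          + dist (leftTranslate g (m (f' y))) (m (f (f' y))) := dist_triangle _ _ _
    _ = dist (leftTranslate h (m y)) (m (f' y))
          + dist (leftTranslate g (m (f' y))) (m (f (f' y))) := by
        rw [leftTranslate_mul, LinearIsometry.dist_map]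
    _ < ε + δ := add_lt_add (hf' y) (hf (f' y))

protected lemma inv (hf : IsApproxEquivariant m g f ε) (hff' : RightInverse f' f) :
    IsApproxEquivariant m g⁻¹ f' ε := fun y ↦
  calc dist (leftTranslate g⁻¹ (m y)) (m (f' y))
      = dist (leftTranslate g (leftTranslate g⁻¹ (m y))) (leftTranslate g (m (f' y))) :=
        (LinearIsometry.dist_map _ _ _).symm
    _ = dist (leftTranslate g (m (f' y))) (m (f (f' y))) := by
        rw [← leftTranslate_mul, mul_inv_cancel, leftTranslate_one, hff', dist_comm]
    _ < ε := hf (f' y)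

end IsApproxEquivariant

variable [TopologicalSpace Y] [TopologicalSpace Z]

lemma topologicallyAmenable_iff {α : Γ → Y → Y} :
    TopologicallyAmenable α ↔ ∀ F : Finset Γ, ∀ ε > 0, ∃ m : C(Y, ℓ¹(Γ, ℝ)),
      (∀ y, m y ∈ finDensities Γ) ∧ ∀ g ∈ F, IsApproxEquivariant m g (α g) ε := by
  refine forall₃_congr fun F ε _ ↦ ⟨?_, ?_⟩
  · rintro ⟨m, hm₀, hfin, hm₁, hcont, hF⟩
    let M : Y → ℓ¹(Γ, ℝ) := fun y ↦ ⟨m y, memℓp_one_of_finite_support (hfin y)⟩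
    have hM : Continuous M := continuous_iff_continuousAt.2 fun y ↦
      Metric.tendsto_nhds.2 fun δ hδ ↦ by
        obtain ⟨U, hU, hyU, hUδ⟩ := hcont y δ hδ
        filter_upwards [hU.mem_nhds hyU] with z hz
        rw [dist_comm, ellOne_dist_eq_tsum]
        exact hUδ z hz
    refine ⟨⟨M, hM⟩, fun y ↦ ⟨fun γ ↦ (hm₀ y γ).1, hfin y, hm₁ y⟩, fun g hg y ↦ ?_⟩
    rw [ellOne_dist_eq_tsum]
    exact hF g hg y
  · rintro ⟨m, hm, hF⟩
    refine ⟨fun y ↦ m y, fun y γ ↦ ⟨(hm y).1 γ, le_one_of_mem_finDensities (hm y) γ⟩,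
      fun y ↦ (hm y).2.1, fun y ↦ (hm y).2.2, fun y δ hδ ↦ ?_, fun g hg y ↦ ?_⟩
    · refine ⟨m ⁻¹' Metric.ball (m y) δ, Metric.isOpen_ball.preimage m.continuous,
        Metric.mem_ball_self hδ, fun z hz ↦ ?_⟩
      rw [← ellOne_dist_eq_tsum, dist_comm]
      exact hz
    · have hgy := hF g hg y
      rwa [ellOne_dist_eq_tsum] at hgy

lemma TopologicallyAmenable.pullback {α : Γ → Y → Y} {β : Γ → Z → Z}
    (hβ : TopologicallyAmenable β) (π : C(Y, Z)) (hπ : ∀ g, Semiconj π (α g) (β g)) :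
    TopologicallyAmenable α := by
  rw [topologicallyAmenable_iff] at hβ ⊢
  intro F ε hε
  obtain ⟨m, hm, hF⟩ := hβ F ε hε
  refine ⟨m.comp π, fun y ↦ hm (π y), fun g hg y ↦ ?_⟩
  simpa only [ContinuousMap.comp_apply, (hπ g).eq] using hF g hg (π y)

theorem topologicallyAmenable_of_closure_range_eq_top (b : Γ →* (Y ≃ₜ Y)) {s : ι → Γ}
    (hs : Subgroup.closure (Set.range s) = ⊤)
    (hb : ∀ F : Finset ι, ∀ ε > 0, ∃ m : C(Y, ℓ¹(Γ, ℝ)),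
      (∀ y, m y ∈ finDensities Γ) ∧ ∀ i ∈ F, IsApproxEquivariant m (s i) (b (s i)) ε) :
    TopologicallyAmenable fun g y ↦ b g y := by
  classical
  choose! m hm hmF using fun p : Finset ι × ℕ ↦ hb p.1 (1 / ((p.2 : ℝ) + 1)) (by positivity)
  have eventually_all : ∀ g : Γ, ∀ ε > 0, ∀ᶠ p in atTop, IsApproxEquivariant (m p) g (b g) ε := by
    intro g
    have hg : g ∈ Subgroup.closure (Set.range s) := hs ▸ Subgroup.mem_top g
    induction hg using Subgroup.closure_induction with
    | mem g hg =>
      obtain ⟨i, rfl⟩ := hg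
      intro ε hε
      obtain ⟨n, hn⟩ := exists_nat_one_div_lt hε
      filter_upwards [eventually_ge_atTop ({i}, n)] with p hp y
      calc dist (leftTranslate (s i) (m p y)) (m p (b (s i) y))
          < 1 / ((p.2 : ℝ) + 1) := hmF p i (hp.1 (Finset.mem_singleton_self i)) y
        _ ≤ 1 / ((n : ℝ) + 1) := Nat.one_div_le_one_div hp.2
        _ < ε := hn
    | one => exact fun ε hε ↦ .of_forall fun p ↦ by simpa using .one (m p) hε
    | mul g h _ _ hg hh =>
      intro ε hε
      filter_upwards [hg _ (half_pos hε), hh _ (half_pos hε)] with p hpg hph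
      rw [map_mul, ← add_halves ε]
      exact hpg.mul hph
    | inv g _ hg =>
      intro ε hε
      filter_upwards [hg ε hε] with p hp
      exact hp.inv fun y ↦ by simp
  refine topologicallyAmenable_iff.2 fun F ε hε ↦ ?_
  obtain ⟨p, hp⟩ := ((Finset.eventually_all F).2 fun g _ ↦ eventually_all g ε hε).exists
  exact ⟨m p, hm p, hp⟩

end Fields

section Itinerary

variable {Γ Y ι : Type*} [Group Γ] [TopologicalSpace Y]

/-- The product of the first `n` letters of the itinerary of `y`: the first letter is `head y`, and
the remaining ones are the letters of the itinerary of `(head y)⁻¹ y`. -/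
def itinerary (b : Γ →* (Y ≃ₜ Y)) (head : Y → Γ) : ℕ → Y → Γ
  | 0, _ => 1
  | n + 1, y => head y * itinerary b head n (b (head y)⁻¹ y)

variable {b : Γ →* (Y ≃ₜ Y)} {head : Y → Γ}

lemma itinerary_succ_apply_of_head_eq {g : Γ} {y : Y} (hg : head (b g y) = g) (n : ℕ) :
    itinerary b head (n + 1) (b g y) = g * itinerary b head n y := by
  simp [itinerary, hg]

lemma isLocallyConstant_itinerary (hhead : IsLocallyConstant head) (n : ℕ) :
    IsLocallyConstant (itinerary b head n) := by
  induction n with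
  | zero => exact .const 1
  | succ n ih =>
    rw [IsLocallyConstant.iff_eventually_eq] at hhead ⊢
    intro y
    have htail := (ih.comp_continuous (b (head y)⁻¹).continuous).eventually_eq y
    filter_upwards [hhead y, htail] with z hz hz'
    simp only [itinerary, hz]
    exact congrArg (head y * ·) hz'

/-- The field of densities spreading mass uniformly over the first `N` partial products of the
itinerary. -/
noncomputable def itineraryMean (b : Γ →* (Y ≃ₜ Y)) (head : Y → Γ) (N : ℕ) (y : Y) : ℓ¹(Γ, ℝ) :=
  uniformMean N fun n ↦ itinerary b head n y

lemma continuous_itineraryMean (hhead : IsLocallyConstant head) (N : ℕ) :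
    Continuous (itineraryMean b head N) := by
  unfold itineraryMean uniformMean
  exact (continuous_finsetSum _ fun n _ ↦
    ((isLocallyConstant_itinerary hhead n).comp pointMass).continuous).const_smul (N : ℝ)⁻¹

lemma dist_leftTranslate_itineraryMean_le {g : Γ} {y : Y} (hg : head (b g y) = g) (N : ℕ) :
    dist (leftTranslate g (itineraryMean b head N y)) (itineraryMean b head N (b g y)) ≤ 2 / N := by
  simp only [itineraryMean, leftTranslate_uniformMean, ← itinerary_succ_apply_of_head_eq hg]
  exact dist_uniformMean_succ_le N fun n ↦ itinerary b head n (b g y)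

lemma isApproxEquivariant_itineraryMean {g : Γ} {N : ℕ} {ε : ℝ} (hN : 2 / N < ε)
    (hg : ∀ y, head (b g y) = g ∨ head y = g⁻¹) :
    IsApproxEquivariant (itineraryMean b head N) g (b g) ε := by
  intro y
  refine lt_of_le_of_lt ?_ hN
  obtain hgy | hgy := hg y
  · exact dist_leftTranslate_itineraryMean_le hgy N
  · have hback : b g⁻¹ (b g y) = y := by simp
    have hdist := dist_leftTranslate_itineraryMean_le (head := head) (hback.symm ▸ hgy) N
    rwa [hback, ← LinearIsometry.dist_map (leftTranslate g), ← leftTranslate_mul, mul_inv_cancel,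
      leftTranslate_one, dist_comm] at hdist

theorem topologicallyAmenable_of_forall_exists_head (b : Γ →* (Y ≃ₜ Y)) {s : ι → Γ}
    (hs : Subgroup.closure (Set.range s) = ⊤)
    (hhead : ∀ F : Finset ι, ∃ head : Y → Γ, IsLocallyConstant head ∧
      ∀ i ∈ F, ∀ y, head (b (s i) y) = s i ∨ head y = (s i)⁻¹) :
    TopologicallyAmenable fun g y ↦ b g y := by
  refine topologicallyAmenable_of_closure_range_eq_top b hs fun F ε hε ↦ ?_
  obtain ⟨head, hlc, hF⟩ := hhead F
  obtain ⟨N, hN⟩ : ∃ N : ℕ, 2 / (N : ℝ) < ε ∧ N ≠ 0 :=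
    (((tendsto_const_div_atTop_nhds_zero_nat 2).eventually_lt_const hε).and
      (eventually_ne_atTop 0)).exists
  exact ⟨⟨itineraryMean b head N, continuous_itineraryMean hlc N⟩,
    fun y ↦ uniformMean_mem_finDensities hN.2 _,
    fun i hi ↦ isApproxEquivariant_itineraryMean hN.1 (hF i hi)⟩

end Itinerary

section PingPong

variable {Y ι α : Type*} [TopologicalSpace Y]

lemma isLocallyConstant_piecewise {s : Set Y} [∀ y, Decidable (y ∈ s)] (hs : IsClopen s)
    {f g : Y → α} (hf : IsLocallyConstant f) (hg : IsLocallyConstant g) :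
    IsLocallyConstant (s.piecewise f g) := fun t ↦ by
  rw [Set.piecewise_preimage]
  exact ((hf t).inter hs.isOpen).union ((hg t).sdiff hs.isClosed)

lemma exists_isLocallyConstant_eqOn [Nonempty α] {A : ι → Set Y} (hA : ∀ i, IsClopen (A i))
    (hdisj : Pairwise (Disjoint on A)) (c : ι → α) (K : Finset ι) :
    ∃ f : Y → α, IsLocallyConstant f ∧ ∀ i ∈ K, ∀ y ∈ A i, f y = c i := by
  classical
  induction K using Finset.induction_on with
  | empty => exact ⟨fun _ ↦ Classical.arbitrary α, .const _, by simp⟩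
  | insert i K hi ih =>
    obtain ⟨f, hf, hfK⟩ := ih
    refine ⟨(A i).piecewise (fun _ ↦ c i) f,
      isLocallyConstant_piecewise (hA i) (.const _) hf, fun j hj y hy ↦ ?_⟩
    obtain rfl | hjK := Finset.mem_insert.1 hj
    · exact Set.piecewise_eq_of_mem _ _ _ hy
    · have hji : j ≠ i := ne_of_mem_of_not_mem hjK hi
      rw [Set.piecewise_eq_of_notMem _ _ _ (Set.disjoint_left.1 (hdisj hji) hy)]
      exact hfK j hjK y hy

theorem topologicallyAmenable_lift_of_pingPong (φ : ι → Y ≃ₜ Y) {A : ι × Bool → Set Y}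
    (hA : ∀ l, IsClopen (A l)) (hdisj : Pairwise (Disjoint on A))
    (hφ : ∀ i, ∀ y ∉ A (i, false), φ i y ∈ A (i, true)) :
    TopologicallyAmenable fun g y ↦ FreeGroup.lift φ g y := by
  refine topologicallyAmenable_of_forall_exists_head _ (FreeGroup.closure_range_of ι) fun F ↦ ?_
  obtain ⟨head, hlc, hhead⟩ := exists_isLocallyConstant_eqOn hA hdisj
    (fun l ↦ FreeGroup.mk [l]) (F ×ˢ Finset.univ)
  refine ⟨head, hlc, fun i hi y ↦ ?_⟩
  by_cases hy : y ∈ A (i, false)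
  · exact .inr <| hhead (i, false) (by simp [hi]) y hy
  · rw [FreeGroup.lift_apply_of]
    exact .inl <| hhead (i, true) (by simp [hi]) _ (hφ i y hy)

end PingPong

section SelfSimilar

variable {Y : Type*} [TopologicalSpace Y]

/-- For a space `Y` made of two copies of itself, the decomposition into a copy of `Y` (the left
summand) and the `n`-th of the successively split off copies of `Y` (the right summand). In the
recursive step the first half of `Y` is decomposed, and what is left of it is glued back to the
second half. -/
def splitOff (e : Y ≃ₜ Y ⊕ Y) : ℕ → (Y ≃ₜ Y ⊕ Y)
  | 0 => e
  | n + 1 => e.trans <| ((splitOff e n).sumCongr (.refl Y)).trans <|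
      (Homeomorph.sumAssoc Y Y Y).trans <| ((Homeomorph.refl Y).sumCongr (.sumComm Y Y)).trans <|
      (Homeomorph.sumAssoc Y Y Y).symm.trans <| e.symm.sumCongr (.refl Y)

/-- The `n`-th of the successively split off copies of `Y` in `Y`. -/
def piece (e : Y ≃ₜ Y ⊕ Y) (n : ℕ) : Set Y :=
  (splitOff e n).symm '' Set.range Sum.inr

variable (e : Y ≃ₜ Y ⊕ Y)

lemma isClopen_piece (n : ℕ) : IsClopen (piece e n) :=
  ⟨(splitOff e n).symm.isClosed_image.2 isClopen_range_inr.isClosed,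
    (splitOff e n).symm.isOpen_image.2 isClopen_range_inr.isOpen⟩

lemma piece_succ (n : ℕ) : piece e (n + 1) = (fun y ↦ e.symm (Sum.inl y)) '' piece e n := by
  simp only [piece, ← Set.range_comp]
  rfl

lemma disjoint_piece_of_lt {m n : ℕ} (hmn : m < n) : Disjoint (piece e m) (piece e n) := by
  obtain ⟨n, rfl⟩ := Nat.exists_eq_succ_of_ne_zero hmn.ne_bot
  induction m generalizing n with
  | zero =>
    rw [Set.disjoint_left]
    rintro _ ⟨_, ⟨z, rfl⟩, rfl⟩ hz
    rw [piece_succ] at hz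
    obtain ⟨w, -, hw⟩ := hz
    simp [splitOff] at hw
  | succ m ih =>
    rw [piece_succ, piece_succ]
    refine (Set.disjoint_image_iff (e.symm.injective.comp Sum.inl_injective)).2 ?_
    obtain ⟨n, rfl⟩ := Nat.exists_eq_succ_of_ne_zero (Nat.succ_lt_succ_iff.1 hmn).ne_bot
    exact ih n (Nat.succ_lt_succ_iff.1 hmn)

lemma pairwise_disjoint_piece : Pairwise (Disjoint on piece e) :=
  (pairwise_disjoint_on _).2 fun _ _ ↦ disjoint_piece_of_lt e

/-- A homeomorphism of `Y` throwing the complement of the piece `q` into the piece `p`: it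
exchanges the two summands when passing from `splitOff e q` to `splitOff e p`. -/
def throwHomeo (p q : ℕ) : Y ≃ₜ Y :=
  ((splitOff e q).trans (Homeomorph.sumComm Y Y)).trans (splitOff e p).symm

lemma throwHomeo_mem_piece {p q : ℕ} {y : Y} (hy : y ∉ piece e q) :
    throwHomeo e p q y ∈ piece e p := by
  obtain ⟨z, rfl⟩ := (splitOff e q).symm.surjective y
  rcases z with z | z
  · exact ⟨Sum.inr z, ⟨z, rfl⟩, by simp [throwHomeo]⟩
  · exact absurd ⟨_, ⟨z, rfl⟩, rfl⟩ hy

theorem exists_topologicallyAmenable_freeGroup (hY : Nonempty (Y ≃ₜ Y ⊕ Y)) (ι : Type*)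
    [Countable ι] :
    ∃ b : FreeGroup ι →* (Y ≃ₜ Y), TopologicallyAmenable fun g y ↦ b g y := by
  obtain ⟨e⟩ := hY
  obtain ⟨index, hindex⟩ := exists_injective_nat (ι × Bool)
  exact ⟨_, topologicallyAmenable_lift_of_pingPong
    (fun i ↦ throwHomeo e (index (i, true)) (index (i, false))) (A := fun l ↦ piece e (index l))
    (fun l ↦ isClopen_piece e _) ((pairwise_disjoint_piece e).comp_of_injective hindex)
    fun i y hy ↦ throwHomeo_mem_piece e hy⟩

end SelfSimilar

/-- The Cantor space is the disjoint union of two cylinders, both homeomorphic to it. -/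
def cantorHomeoSum : CantorSp ≃ₜ CantorSp ⊕ CantorSp :=
  let boolHomeoSum : (Unit → Bool) ≃ₜ Unit ⊕ Unit :=
    (Homeomorph.funUnique Unit Bool).trans Equiv.boolEquivPUnitSumPUnit.toHomeomorphOfDiscrete
  (Homeomorph.piCongrLeft (Y := fun _ ↦ Bool) Equiv.natEquivNatSumPUnit).trans <|
    Homeomorph.sumArrowHomeomorphProdArrow.trans <|
    ((Homeomorph.refl CantorSp).prodCongr boolHomeoSum).trans <|
    Homeomorph.prodSumDistrib.trans <|
    (Homeomorph.prodPUnit CantorSp).sumCongr (Homeomorph.prodPUnit CantorSp)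

section Mixing

variable {X Y Z : Type*}

/-- Conjugation of the product homeomorphism `φ × ψ` by an identification `h` of `Y × Z` with
`Y`. -/
def prodConj [TopologicalSpace Y] [TopologicalSpace Z] (h : Y × Z ≃ₜ Y) (φ : Y ≃ₜ Y)
    (ψ : Z ≃ₜ Z) : Y ≃ₜ Y :=
  h.symm.trans ((φ.prodCongr ψ).trans h)

lemma prodConj_apply [TopologicalSpace Y] [TopologicalSpace Z] (h : Y × Z ≃ₜ Y) (φ : Y ≃ₜ Y)
    (ψ : Z ≃ₜ Z) (y : Y) : prodConj h φ ψ y = h (φ (h.symm y).1, ψ (h.symm y).2) :=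
  rfl

lemma tendstoUniformly_prodConj [UniformSpace Y] [TopologicalSpace Z] {κ : Type*} {l : Filter κ}
    {h : κ → Y × Z ≃ₜ Y} (hh : TendstoUniformly (fun k p ↦ h k p) Prod.fst l) {φ : Y ≃ₜ Y}
    (hφ : UniformContinuous φ) (ψ : Z ≃ₜ Z) :
    TendstoUniformly (fun k y ↦ prodConj (h k) φ ψ y) φ l := by
  intro u hu
  obtain ⟨v, hv, hvsymm, hvu⟩ := comp_symm_mem_uniformity_sets hu
  filter_upwards [hh v hv, hh _ (hφ hv)] with k hk hφk y
  have hfst : (φ ((h k).symm y).1, φ y) ∈ v := by simpa using hφk ((h k).symm y)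
  exact hvu ⟨_, hvsymm.symm _ _ hfst, hk (φ ((h k).symm y).1, ψ ((h k).symm y).2)⟩

/-- A bijection `ℕ ⊕ ℕ ≃ ℕ` sending `Sum.inl j` to `j` for `j < k`. -/
def mixIndex (k : ℕ) : ℕ ⊕ ℕ ≃ ℕ :=
  ((finSumNatEquiv k).symm.sumCongr (.refl ℕ)).trans <| (Equiv.sumAssoc (Fin k) ℕ ℕ).trans <|
    ((Equiv.refl (Fin k)).sumCongr Equiv.natSumNatEquivNat).trans (finSumNatEquiv k)

lemma mixIndex_inl_of_lt {j k : ℕ} (hj : j < k) : mixIndex k (Sum.inl j) = j := by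
  simp [mixIndex, hj]

/-- A homeomorphism of the square of `X^ℕ` with `X^ℕ` which keeps the first `k` coordinates of the
first component. -/
def mixHomeo (X : Type*) [TopologicalSpace X] (k : ℕ) : (ℕ → X) × (ℕ → X) ≃ₜ (ℕ → X) :=
  Homeomorph.sumArrowHomeomorphProdArrow.symm.trans
    (Homeomorph.piCongrLeft (Y := fun _ ↦ X) (mixIndex k))

lemma mixHomeo_apply_of_lt [TopologicalSpace X] {j k : ℕ} (hj : j < k) (p : (ℕ → X) × (ℕ → X)) :
    mixHomeo X k p j = p.1 j := by
  have hmix := Equiv.piCongrLeft_apply_apply (fun _ ↦ X) (mixIndex k) (Sum.elim p.1 p.2) (Sum.inl j)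
  rwa [mixIndex_inl_of_lt hj] at hmix

lemma tendstoUniformly_mixHomeo (X : Type*) [UniformSpace X] :
    TendstoUniformly (fun k p ↦ mixHomeo X k p) Prod.fst atTop := by
  rw [tendstoUniformly_iff_tendsto, Pi.uniformity, tendsto_iInf]
  intro j
  rw [tendsto_comap_iff]
  refine tendstoUniformly_iff_tendsto (F := fun k p ↦ mixHomeo X k p j) (f := fun p ↦ p.1 j)
    |>.1 fun u hu ↦ ?_
  filter_upwards [eventually_gt_atTop j] with k hk p
  rw [mixHomeo_apply_of_lt hk]
  exact refl_mem_uniformity hu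

end Mixing

/-- The space `Hom(Γ, Homeo(X))` of actions of `Γ` on the Cantor space, topologized as a subspace of
the product `Homeo(X)^Γ`. -/
abbrev CantorAction (Γ : Type*) [Group Γ] : Type _ :=
  {α : Γ → (CantorSp ≃ₜ CantorSp) // ∀ γ γ', α (γ * γ') = (α γ').trans (α γ)}

section ActionSpace

variable {Γ : Type*} [Group Γ]

lemma tendsto_cantorHomeo_iff {κ : Type*} {l : Filter κ} {F : κ → (CantorSp ≃ₜ CantorSp)}
    {φ : CantorSp ≃ₜ CantorSp} :
    Tendsto F l (𝓝 φ) ↔ TendstoUniformly (fun k x ↦ F k x) φ l ∧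
      TendstoUniformly (fun k x ↦ (F k).symm x) φ.symm l := by
  rw [nhds_induced, tendsto_comap_iff, nhds_prod_eq, tendsto_prod_iff',
    ContinuousMap.tendsto_iff_tendstoUniformly, ContinuousMap.tendsto_iff_tendstoUniformly]
  rfl

lemma tendsto_prodConj_mixHomeo (φ ψ : CantorSp ≃ₜ CantorSp) :
    Tendsto (fun k ↦ prodConj (mixHomeo Bool k) φ ψ) atTop (𝓝 φ) := by
  have tendstoUniformly_conj (φ ψ : CantorSp ≃ₜ CantorSp) :=
    tendstoUniformly_prodConj (tendstoUniformly_mixHomeo Bool)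
      (CompactSpace.uniformContinuous_of_continuous φ.continuous) ψ
  exact tendsto_cantorHomeo_iff.2 ⟨tendstoUniformly_conj φ ψ, tendstoUniformly_conj φ.symm ψ.symm⟩

/-- The product of two actions on the Cantor space, transported to the Cantor space along an
identification of its square with itself. -/
def CantorAction.prod (h : CantorSp × CantorSp ≃ₜ CantorSp) (α β : CantorAction Γ) :
    CantorAction Γ :=
  ⟨fun γ ↦ prodConj h (α.1 γ) (β.1 γ), fun γ γ' ↦ by
    ext1 x
    simp [prodConj_apply, α.2, β.2]⟩

lemma CantorAction.topologicallyAmenable_prod (h : CantorSp × CantorSp ≃ₜ CantorSp)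
    (α : CantorAction Γ) {β : CantorAction Γ} (hβ : TopologicallyAmenable fun γ x ↦ β.1 γ x) :
    TopologicallyAmenable fun γ x ↦ (CantorAction.prod h α β).1 γ x := by
  refine hβ.pullback ⟨fun x ↦ (h.symm x).2, by fun_prop⟩ fun γ x ↦ ?_
  simp [CantorAction.prod, prodConj_apply]

theorem dense_setOf_topologicallyAmenable {β : CantorAction Γ}
    (hβ : TopologicallyAmenable fun γ x ↦ β.1 γ x) :
    Dense {α : CantorAction Γ | TopologicallyAmenable fun γ x ↦ α.1 γ x} := by
  intro α
  have tendsto_prod : Tendsto (fun k ↦ CantorAction.prod (mixHomeo Bool k) α β) atTop (𝓝 α) :=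
    tendsto_subtype_rng.2 <| tendsto_pi_nhds.2 fun γ ↦ tendsto_prodConj_mixHomeo (α.1 γ) (β.1 γ)
  exact mem_closure_of_tendsto tendsto_prod <| .of_forall fun k ↦
    CantorAction.topologicallyAmenable_prod (mixHomeo Bool k) α hβ

lemma isOpen_setOf_isApproxEquivariant {Y : Type*} [TopologicalSpace Y] [CompactSpace Y]
    [LocallyCompactSpace Y] (m : C(Y, ℓ¹(Γ, ℝ))) (g : Γ) (ε : ℝ) :
    IsOpen {f : C(Y, Y) | IsApproxEquivariant m g f ε} := by
  have isOpen_pairs : IsOpen {p : Y × Y | dist (leftTranslate g (m p.1)) (m p.2) < ε} :=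
    isOpen_lt (by fun_prop) continuous_const
  have continuous_graph : Continuous fun f : C(Y, Y) ↦ (ContinuousMap.id Y).prodMk f :=
    ContinuousMap.continuous_of_continuous_uncurry _ (continuous_snd.prodMk continuous_eval)
  simpa [IsApproxEquivariant, Set.MapsTo, Set.preimage] using
    (ContinuousMap.isOpen_setOfPred_mapsTo isCompact_univ isOpen_pairs).preimage continuous_graph

lemma continuous_cantorHomeo_coe :
    Continuous fun φ : CantorSp ≃ₜ CantorSp ↦ (φ : C(CantorSp, CantorSp)) :=
  continuous_fst.comp (continuous_induced_dom (f := fun φ : CantorSp ≃ₜ CantorSp ↦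
    ((φ : C(CantorSp, CantorSp)), (φ.symm : C(CantorSp, CantorSp)))))

theorem isGδ_setOf_topologicallyAmenable [Countable Γ] :
    IsGδ {α : CantorAction Γ | TopologicallyAmenable fun γ x ↦ α.1 γ x} := by
  have eq_iInter : {α : CantorAction Γ | TopologicallyAmenable fun γ x ↦ α.1 γ x} =
      ⋂ (F : Finset Γ) (n : ℕ), ⋃ m ∈ {m : C(CantorSp, ℓ¹(Γ, ℝ)) | ∀ y, m y ∈ finDensities Γ},
        ⋂ g ∈ F, {α : CantorAction Γ | IsApproxEquivariant m g (α.1 g) (1 / ((n : ℝ) + 1))} := by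
    ext α
    simp only [Set.mem_iInter, Set.mem_iUnion, Set.mem_ofPred_eq, topologicallyAmenable_iff,
      exists_prop]
    refine ⟨fun h F n ↦ h F _ (by positivity), fun h F ε hε ↦ ?_⟩
    obtain ⟨n, hn⟩ := exists_nat_one_div_lt hε
    obtain ⟨m, hm, hF⟩ := h F n
    exact ⟨m, hm, fun g hg y ↦ (hF g hg y).trans hn⟩
  rw [eq_iInter]
  have continuous_apply_coe (g : Γ) :
      Continuous fun α : CantorAction Γ ↦ (α.1 g : C(CantorSp, CantorSp)) :=
    continuous_cantorHomeo_coe.comp ((continuous_apply g).comp continuous_subtype_val)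
  exact .iInter fun F ↦ .iInter fun n ↦ IsOpen.isGδ <| isOpen_biUnion fun m _ ↦
    isOpen_biInter_finset fun g _ ↦
      (isOpen_setOf_isApproxEquivariant m g _).preimage (continuous_apply_coe g)

end ActionSpace

theorem amenable_actions_dense_Gdelta_general (ι : Type*) [Countable ι] :
    IsGδ {α : CantorAction (FreeGroup ι) | TopologicallyAmenable fun γ x ↦ α.1 γ x} ∧
    Dense {α : CantorAction (FreeGroup ι) | TopologicallyAmenable fun γ x ↦ α.1 γ x} := by
  obtain ⟨b, hb⟩ := exists_topologicallyAmenable_freeGroup ⟨cantorHomeoSum⟩ ι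
  exact ⟨isGδ_setOf_topologicallyAmenable,
    dense_setOf_topologicallyAmenable (β := ⟨b, map_mul b⟩) hb⟩

/-- Let `Γ` be the free group on the disjoint union `S ⊔ T` of two disjoint
countably infinite sets.  The set of topologically amenable actions in
`𝒮 = Hom(Γ, Homeo(X))` is a dense `G_δ` subset of `𝒮`. -/
theorem amenable_actions_dense_Gdelta
    (S T : Type) [Countable S] [Infinite S] [Countable T] [Infinite T] :
    IsGδ {α : {α : FreeGroup (S ⊕ T) → (CantorSp ≃ₜ CantorSp) //
        ∀ γ γ', α (γ * γ') = (α γ').trans (α γ)} |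
      TopologicallyAmenable fun γ (x : CantorSp) => (α.1 γ) x} ∧
    Dense {α : {α : FreeGroup (S ⊕ T) → (CantorSp ≃ₜ CantorSp) //
        ∀ γ γ', α (γ * γ') = (α γ').trans (α γ)} |
      TopologicallyAmenable fun γ (x : CantorSp) => (α.1 γ) x} :=
  amenable_actions_dense_Gdelta_general (S ⊕ T)
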